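/- Cost upper bound for the dynamic opaque selling policy (Corollary 2): Let R^d be the replenishment cycle length and D^d = Σ_{t=1}^{R^d} f_t·ω(t) the per-cycle discount count of the dynamic opaque policy at stock level S, and let C^d = K/E[R^d] + (h/2)·(2NS + 1 − E[(R^d)²]/E[R^d]) + δ·E[D^d]/E[R^d]. Then there exist constants θ > 0 and c > 0, depending only on N and q, and S₀ ∈ ℕ such that for all S ≥ S₀ and all K > 0, h > 0, δ ∈ [0,1): C^d ≤ K/(NS − θ) + (h/2)·(NS + 1 + θ) + δ·q·c/√S. -/

import Mathlib

/-!
Let `T = N(S-1)+1`.  Then `R ≤ T` (by pigeonhole; `hitTime` also truncates at the horizon `T`), so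
everything follows from two estimates: `E[T - R] = O(1)` and `E[D] = O(√T)`.  The holding cost then needs only Jensen's
inequality `E[R²] ≥ E[R]²`.

*Shortfall.*  Since the maximum load is nondecreasing, `T - R` is at most the number of `t < T`
with `Gap(t) ≥ (T - t)/N` (`shortfall_le`).  Let `Φ_t = ∑ exp (α (x_i - t/N))` and
`ε = q / (2 C(N,2))`.  Greedy placement on a random pair undersamples the highly loaded bins
enough that, while flexing, `E[Φ_{t+1} | F_t] ≤ exp (-αε/2) Φ_t + O(1)` for `α = ε/2`
(`expPot_drift`); only the least loaded bin, whose term is at most `1`, has to be singled out.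
Before the trigger the gap is at most `ε (T - t) / (5N)`, which bounds `Φ_{t+1}`
deterministically.  Combining the two cases, `E[Φ_t] ≤ A exp (αε (T - t) / (5N))`
(`expec_expPot_le`), and Markov's inequality makes the probabilities of `Gap(t) ≥ (T - t)/N`
geometrically small in `T - t` (`exists_shortfall_bound`).

*Discounts.*  Before the trigger time `T⋆` the centred loads are martingales, so optional stopping
gives `E[Gap(T⋆)²] ≤ T`; as `Gap(T⋆)` is at least a constant times `T - T⋆`, flexing lasts `O(√T)`
periods in expectation (`expec_stoppedPot_le`, `expec_flagCount_le`).
-/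

attribute [local instance] Classical.propDecidable

/-- An arrival type: (is-flex-ball, preferred bin, flex set). -/
abbrev Arrival (N : ℕ) := Bool × Fin N × Finset (Fin N)

/-- Mass of a single arrival: `f ~ Bernoulli(q)`, `p` uniform on `Fin N`,
`F` uniform on the 2-element subsets of `Fin N`, mutually independent. -/
noncomputable def arrivalProb (N : ℕ) (q : ℝ) (a : Arrival N) : ℝ :=
  (if a.1 then q else 1 - q) * (1 / (N : ℝ)) *
    (if a.2.2.card = 2 then 1 / (N.choose 2 : ℝ) else 0)

/-- Mass of a sequence of `T` i.i.d. arrivals. -/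
noncomputable def seqMass (N T : ℕ) (q : ℝ) (xs : Fin T → Arrival N) : ℝ :=
  ∏ t, arrivalProb N q (xs t)

/-- Expectation of a real random variable on the canonical space of `T` arrivals. -/
noncomputable def expec (N T : ℕ) (q : ℝ) (X : (Fin T → Arrival N) → ℝ) : ℝ :=
  ∑ xs : Fin T → Arrival N, seqMass N T q xs * X xs

/-- Probability of an event on the canonical space of `T` arrivals. -/
noncomputable def prob (N T : ℕ) (q : ℝ) (A : (Fin T → Arrival N) → Prop) : ℝ :=
  ∑ xs : Fin T → Arrival N, if A xs then seqMass N T q xs else 0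

/-- The least-loaded bin in `F` (ties broken in favor of the smallest index). -/
noncomputable def argminBin {N : ℕ} [NeZero N] (x : Fin N → ℕ) (F : Finset (Fin N)) : Fin N :=
  if hF : (F.filter fun i => ∀ j ∈ F, x i ≤ x j).Nonempty
  then (F.filter fun i => ∀ j ∈ F, x i ≤ x j).min' hF
  else 0

/-- One step of the greedy (least-loaded) allocation: if the ball is a flex ball and
flexing is exerted, it goes to the least-loaded bin of its flex set (lexicographic
tie-breaking); otherwise it goes to its preferred bin. -/
noncomputable def greedyStep {N : ℕ} [NeZero N] (flex : Bool) (a : Arrival N)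
    (x : Fin N → ℕ) : Fin N → ℕ :=
  fun i => if i = (if a.1 && flex then argminBin x a.2.2 else a.2.1) then x i + 1 else x i

/-- Load process under a flexing rule `dec` (which may depend on the whole realization,
the time, and the current loads), with greedy placement of flexed flex balls. -/
noncomputable def greedyLoads {N T : ℕ} [NeZero N]
    (dec : (Fin T → Arrival N) → ℕ → (Fin N → ℕ) → Bool)
    (xs : Fin T → Arrival N) : ℕ → Fin N → ℕ
  | 0 => fun _ => 0
  | t + 1 =>
    if h : t < T then
      greedyStep (dec xs t (greedyLoads dec xs t)) (xs ⟨t, h⟩) (greedyLoads dec xs t)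
    else greedyLoads dec xs t

/-- The maximum load over all bins. -/
noncomputable def maxLoad {N : ℕ} (x : Fin N → ℕ) : ℕ := Finset.univ.sup x

/-- `Gap(t)` : maximum load minus the average load `t/N`. -/
noncomputable def gap {N : ℕ} (x : Fin N → ℕ) (t : ℕ) : ℝ :=
  (maxLoad x : ℝ) - (t : ℝ) / (N : ℝ)

/-- Number of flexed balls `M = ∑_t f_t ω(t)`. -/
noncomputable def numFlexed {N T : ℕ} [NeZero N]
    (dec : (Fin T → Arrival N) → ℕ → (Fin N → ℕ) → Bool) (xs : Fin T → Arrival N) : ℕ :=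
  ∑ t : Fin T, if (xs t).1 && dec xs (t : ℕ) (greedyLoads dec xs (t : ℕ)) then 1 else 0

/-- Flexing rule of a "static"-type policy: flex exactly from period
`T - c·√(T log T)` on (ball `t` corresponds to step index `t-1`). -/
noncomputable def lateDec (N T : ℕ) (c : ℝ) :
    (Fin T → Arrival N) → ℕ → (Fin N → ℕ) → Bool :=
  fun _ s _ =>
    if (T : ℝ) - c * Real.sqrt ((T : ℝ) * Real.log (T : ℝ)) ≤ ((s : ℝ) + 1) then true else false

/-- Flexing rule of the dynamic policy: flex at period `t = s+1` iff the current gap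
`Gap(t-1)` is at least `a_d (T - t) q / N` with `a_d = 1/(5 C(N,2))`. -/
noncomputable def dynDec (N T : ℕ) (q : ℝ) :
    (Fin T → Arrival N) → ℕ → (Fin N → ℕ) → Bool :=
  fun _ s x =>
    if (1 / (5 * (N.choose 2 : ℝ))) * ((T : ℝ) - ((s : ℝ) + 1)) * q / (N : ℝ) ≤ gap x s
    then true else false

/-- First time (within horizon `T`) at which the maximum load equals `S`. -/
noncomputable def hitTime {N : ℕ} (T S : ℕ) (x : ℕ → Fin N → ℕ) : ℕ :=
  if h : ((Finset.range (T + 1)).filter fun t => maxLoad (x t) = S).Nonempty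
  then ((Finset.range (T + 1)).filter fun t => maxLoad (x t) = S).min' h
  else T

/-- The dynamic opaque policy: the flag records whether the trigger condition
`Gap(t) ≥ c_d (T-t) q / N` (with `c_d = 1/(10 C(N,2))`) has held at some time `≤ t`;
from then on every flex ball is flexed (greedy placement). Returns (flag, loads). -/
noncomputable def dynOpaque (N T : ℕ) [NeZero N] (q : ℝ) (xs : Fin T → Arrival N) :
    ℕ → Bool × (Fin N → ℕ)
  | 0 =>
    (if (1 / (10 * (N.choose 2 : ℝ))) * (T : ℝ) * q / (N : ℝ) ≤ 0 then true else false,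
      fun _ => 0)
  | t + 1 =>
    let p := dynOpaque N T q xs t
    let x' := if h : t < T then greedyStep p.1 (xs ⟨t, h⟩) p.2 else p.2
    (p.1 ||
      (if (1 / (10 * (N.choose 2 : ℝ))) * ((T : ℝ) - ((t : ℝ) + 1)) * q / (N : ℝ) ≤
          gap x' (t + 1)
       then true else false),
     x')

/-- Number of flexed balls `D = ∑_{t=1}^{R} f_t ω(t)` during one replenishment cycle,
for a policy given by the flexing rule `dec`. -/
noncomputable def cycleFlexCount (N T : ℕ) [NeZero N]
    (dec : (Fin T → Arrival N) → ℕ → (Fin N → ℕ) → Bool) (S : ℕ)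
    (xs : Fin T → Arrival N) : ℕ :=
  ∑ t ∈ Finset.range (hitTime T S (greedyLoads dec xs)),
    if h : t < T then (if (xs ⟨t, h⟩).1 && dec xs t (greedyLoads dec xs t) then 1 else 0)
    else 0

/-- Number of flexed balls during one replenishment cycle of the dynamic opaque policy. -/
noncomputable def dynFlexCount (N T : ℕ) [NeZero N] (q : ℝ) (S : ℕ)
    (xs : Fin T → Arrival N) : ℕ :=
  ∑ t ∈ Finset.range (hitTime T S fun u => (dynOpaque N T q xs u).2),
    if h : t < T then (if (xs ⟨t, h⟩).1 && (dynOpaque N T q xs t).1 then 1 else 0) else 0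

/-- Expected cycle length `E[R^d]` of the dynamic opaque policy at stock level `S`. -/
noncomputable def dynER (N : ℕ) [NeZero N] (q : ℝ) (S : ℕ) : ℝ :=
  expec N (N * (S - 1) + 1) q fun xs =>
    (hitTime (N * (S - 1) + 1) S
      (fun t => (dynOpaque N (N * (S - 1) + 1) q xs t).2) : ℝ)

/-- Second moment `E[(R^d)²]` of the dynamic opaque cycle length at stock level `S`. -/
noncomputable def dynER2 (N : ℕ) [NeZero N] (q : ℝ) (S : ℕ) : ℝ :=
  expec N (N * (S - 1) + 1) q fun xs =>
    ((hitTime (N * (S - 1) + 1) S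
      (fun t => (dynOpaque N (N * (S - 1) + 1) q xs t).2) : ℝ)) ^ 2

/-- Expected per-cycle discount count `E[D^d]` of the dynamic opaque policy. -/
noncomputable def dynED (N : ℕ) [NeZero N] (q : ℝ) (S : ℕ) : ℝ :=
  expec N (N * (S - 1) + 1) q fun xs =>
    (dynFlexCount N (N * (S - 1) + 1) q S xs : ℝ)

/-- Long-run average cost `C^d` of the dynamic opaque policy. -/
noncomputable def dynCost (N : ℕ) [NeZero N] (q K h δ : ℝ) (S : ℕ) : ℝ :=
  K / dynER N q S +
    (h / 2) * (2 * (N : ℝ) * (S : ℝ) + 1 - dynER2 N q S / dynER N q S) +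
    δ * dynED N q S / dynER N q S

/-- The universal lower bound `C⋆ = K/(N(S-1)+1) + (h/2)(NS + N)`. -/
noncomputable def optCost (N : ℕ) (K h : ℝ) (S : ℕ) : ℝ :=
  K / ((N : ℝ) * ((S : ℝ) - 1) + 1) + (h / 2) * ((N : ℝ) * (S : ℝ) + (N : ℝ))

section DynamicOpaque

variable {N : ℕ}

/-! ### Expectations on the canonical space -/

lemma sum_card_two (N : ℕ) (g : Finset (Fin N) → ℝ) :
    ∑ F : Finset (Fin N), (if F.card = 2 then g F else 0)
      = ∑ F ∈ Finset.powersetCard 2 (Finset.univ : Finset (Fin N)), g F := by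
  rw [← Finset.sum_filter]
  apply Finset.sum_congr _ (fun _ _ => rfl)
  ext F
  simp [Finset.mem_powersetCard]

lemma choose_two_pos (hN : 2 ≤ N) : (0 : ℝ) < (N.choose 2 : ℝ) := by
  exact_mod_cast Nat.choose_pos hN

lemma arrival_sum_prod (q : ℝ) (X : Bool → Fin N → Finset (Fin N) → ℝ) :
    ∑ a : Arrival N, arrivalProb N q a * X a.1 a.2.1 a.2.2 =
      q * (1 / N) * (1 / (N.choose 2 : ℝ)) *
        (∑ p : Fin N, ∑ F ∈ Finset.powersetCard 2 (Finset.univ : Finset (Fin N)), X true p F) +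
      (1 - q) * (1 / N) * (1 / (N.choose 2 : ℝ)) *
        (∑ p : Fin N, ∑ F ∈ Finset.powersetCard 2 (Finset.univ : Finset (Fin N)),
          X false p F) := by
  rw [Fintype.sum_prod_type, Fintype.sum_bool]
  simp only [Fintype.sum_prod_type, arrivalProb, if_true, Bool.false_eq_true, if_false]
  congr 1 <;>
  · rw [Finset.mul_sum]
    refine Finset.sum_congr rfl fun p _ => ?_
    rw [Finset.mul_sum, ← sum_card_two]
    refine Finset.sum_congr rfl fun F _ => ?_
    split_ifs <;> ring

lemma card_pairs (N : ℕ) :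
    ((Finset.powersetCard 2 (Finset.univ : Finset (Fin N))).card : ℝ) = N.choose 2 := by
  simp [Finset.card_powersetCard]

/-- Averaging over the arrival when the flex option is exerted. -/
lemma arrival_sum_flex [NeZero N] (hN : 2 ≤ N) (q : ℝ) (x : Fin N → ℕ) (g : Fin N → ℝ) :
    ∑ a : Arrival N, arrivalProb N q a *
        g (if a.1 && true then argminBin x a.2.2 else a.2.1) =
      q / (N.choose 2 : ℝ) * (∑ F ∈ Finset.powersetCard 2 (Finset.univ : Finset (Fin N)),
        g (argminBin x F)) + (1 - q) / N * ∑ i, g i := by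
  have hC := (choose_two_pos hN).ne'
  have hN0 : (N : ℝ) ≠ 0 := by positivity
  rw [arrival_sum_prod q fun f p F => g (if f && true then argminBin x F else p)]
  simp only [Bool.and_true, if_true, Bool.false_eq_true, if_false, Finset.sum_const,
    Finset.card_univ, Fintype.card_fin, nsmul_eq_mul, card_pairs]
  rw [← Finset.mul_sum]
  field_simp

/-- Averaging over the arrival when the flex option is not exerted. -/
lemma arrival_sum_noflex [NeZero N] (hN : 2 ≤ N) (q : ℝ) (x : Fin N → ℕ) (g : Fin N → ℝ) :
    ∑ a : Arrival N, arrivalProb N q a *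
        g (if a.1 && false then argminBin x a.2.2 else a.2.1) = 1 / N * ∑ i, g i := by
  have hC := (choose_two_pos hN).ne'
  have hN0 : (N : ℝ) ≠ 0 := by positivity
  rw [arrival_sum_prod q fun f p F => g (if f && false then argminBin x F else p)]
  simp only [Bool.and_false, Bool.false_eq_true, if_false, Finset.sum_const,
    nsmul_eq_mul, card_pairs]
  rw [← Finset.mul_sum]
  field_simp
  ring

lemma arrivalProb_nonneg {q : ℝ} (hq0 : 0 < q) (hq1 : q ≤ 1) (a : Arrival N) :
    0 ≤ arrivalProb N q a := by
  unfold arrivalProb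
  have : 0 ≤ 1 - q := by linarith
  split_ifs <;> positivity

lemma arrivalProb_sum [NeZero N] (hN : 2 ≤ N) (q : ℝ) :
    ∑ a : Arrival N, arrivalProb N q a = 1 := by
  have h := arrival_sum_noflex hN q (fun _ => 0) (fun _ => 1)
  have hN0 : (N : ℝ) ≠ 0 := by positivity
  simpa [hN0] using h

lemma seqMass_nonneg {T : ℕ} {q : ℝ} (hq0 : 0 < q) (hq1 : q ≤ 1) (xs : Fin T → Arrival N) :
    0 ≤ seqMass N T q xs :=
  Finset.prod_nonneg fun _ _ => arrivalProb_nonneg hq0 hq1 _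

lemma seqMass_sum [NeZero N] (hN : 2 ≤ N) (T : ℕ) (q : ℝ) :
    ∑ xs : Fin T → Arrival N, seqMass N T q xs = 1 := by
  have h := Finset.prod_univ_sum (fun _ : Fin T => (Finset.univ : Finset (Arrival N)))
    (fun _ a => arrivalProb N q a)
  simp only [arrivalProb_sum hN, Finset.prod_const_one, Fintype.piFinset_univ] at h
  exact h.symm

lemma expec_mono {T : ℕ} {q : ℝ} (hq0 : 0 < q) (hq1 : q ≤ 1)
    {X Y : (Fin T → Arrival N) → ℝ} (h : ∀ xs, X xs ≤ Y xs) :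
    expec N T q X ≤ expec N T q Y :=
  Finset.sum_le_sum fun xs _ => mul_le_mul_of_nonneg_left (h xs) (seqMass_nonneg hq0 hq1 xs)

lemma expec_const [NeZero N] (hN : 2 ≤ N) (T : ℕ) (q c : ℝ) :
    expec N T q (fun _ => c) = c := by
  unfold expec
  rw [← Finset.sum_mul, seqMass_sum hN, one_mul]

lemma expec_add (T : ℕ) (q : ℝ) (X Y : (Fin T → Arrival N) → ℝ) :
    expec N T q (fun xs => X xs + Y xs) = expec N T q X + expec N T q Y := by
  simp [expec, mul_add, Finset.sum_add_distrib]

lemma expec_mul (T : ℕ) (q c : ℝ) (X : (Fin T → Arrival N) → ℝ) :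
    expec N T q (fun xs => c * X xs) = c * expec N T q X := by
  simp only [expec, Finset.mul_sum]
  exact Finset.sum_congr rfl fun _ _ => by ring

lemma expec_sum {ι : Type*} (T : ℕ) (q : ℝ) (s : Finset ι)
    (X : ι → (Fin T → Arrival N) → ℝ) :
    expec N T q (fun xs => ∑ i ∈ s, X i xs) = ∑ i ∈ s, expec N T q (X i) := by
  simp only [expec, Finset.mul_sum]
  exact Finset.sum_comm

/-- Replacing arrival `t` by an independent copy leaves expectations unchanged.  This is the
form of the Markov property used below.  The map `(xs, a) ↦ (update xs t a, xs t)` is a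
mass-preserving involution. -/
lemma expec_resample [NeZero N] (hN : 2 ≤ N) {T : ℕ} (q : ℝ) (t : Fin T)
    (X : (Fin T → Arrival N) → ℝ) :
    expec N T q X =
      expec N T q (fun xs => ∑ a, arrivalProb N q a * X (Function.update xs t a)) := by
  have hmass : ∀ (xs : Fin T → Arrival N) (a : Arrival N),
      seqMass N T q (Function.update xs t a) * arrivalProb N q (xs t)
        = seqMass N T q xs * arrivalProb N q a := by
    intro xs a
    unfold seqMass
    rw [← Finset.mul_prod_erase Finset.univ _ (Finset.mem_univ t),
      ← Finset.mul_prod_erase Finset.univ (fun i => arrivalProb N q (xs i)) (Finset.mem_univ t)]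
    have : ∏ i ∈ Finset.univ.erase t, arrivalProb N q (Function.update xs t a i)
        = ∏ i ∈ Finset.univ.erase t, arrivalProb N q (xs i) :=
      Finset.prod_congr rfl fun i hi => by
        rw [Function.update_of_ne (Finset.ne_of_mem_erase hi)]
    rw [this, Function.update_self]
    ring
  let e : ((Fin T → Arrival N) × Arrival N) → ((Fin T → Arrival N) × Arrival N) :=
    fun z => (Function.update z.1 t z.2, z.1 t)
  have he : Function.Involutive e := by
    rintro ⟨xs, a⟩
    simp [e]
  have h1 : expec N T q X = ∑ z : (Fin T → Arrival N) × Arrival N,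
      seqMass N T q z.1 * arrivalProb N q z.2 * X z.1 := by
    rw [Fintype.sum_prod_type]
    refine Finset.sum_congr rfl fun xs _ => ?_
    calc seqMass N T q xs * X xs
        = seqMass N T q xs * X xs * ∑ a, arrivalProb N q a := by
          rw [arrivalProb_sum hN, mul_one]
      _ = _ := by
          rw [Finset.mul_sum]
          exact Finset.sum_congr rfl fun _ _ => by ring
  rw [h1, ← Equiv.sum_comp (he.toPerm e), Fintype.sum_prod_type]
  refine Finset.sum_congr rfl fun xs _ => ?_
  rw [Finset.mul_sum]
  refine Finset.sum_congr rfl fun a _ => ?_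
  change seqMass N T q (Function.update xs t a) * arrivalProb N q (xs t) *
    X (Function.update xs t a) = _
  rw [hmass]
  ring

/-! ### One allocation step -/

/-- The bin receiving the ball. -/
noncomputable def chosenBin [NeZero N] (flex : Bool) (a : Arrival N) (x : Fin N → ℕ) : Fin N :=
  if a.1 && flex then argminBin x a.2.2 else a.2.1

lemma greedyStep_eq [NeZero N] (flex : Bool) (a : Arrival N) (x : Fin N → ℕ) (i : Fin N) :
    (greedyStep flex a x i : ℝ) = x i + if i = chosenBin flex a x then 1 else 0 := by
  unfold greedyStep chosenBin
  split_ifs <;> simp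

lemma greedyStep_ge [NeZero N] (flex : Bool) (a : Arrival N) (x : Fin N → ℕ) (i : Fin N) :
    x i ≤ greedyStep flex a x i := by
  unfold greedyStep; split_ifs <;> omega

lemma greedyStep_le [NeZero N] (flex : Bool) (a : Arrival N) (x : Fin N → ℕ) (i : Fin N) :
    greedyStep flex a x i ≤ x i + 1 := by
  unfold greedyStep; split_ifs <;> omega

lemma greedyStep_sum [NeZero N] (flex : Bool) (a : Arrival N) (x : Fin N → ℕ) :
    ∑ i, greedyStep flex a x i = ∑ i, x i + 1 := by
  have : ∑ i, (greedyStep flex a x i : ℝ) = ∑ i, (x i : ℝ) + 1 := by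
    simp [greedyStep_eq, Finset.sum_add_distrib]
  exact_mod_cast this

lemma argminBin_pair [NeZero N] (x : Fin N → ℕ) (F : Finset (Fin N)) :
    ∀ j ∈ F, x (argminBin x F) ≤ x j := by
  intro j hj
  have hne : (F.filter fun i => ∀ j ∈ F, x i ≤ x j).Nonempty := by
    obtain ⟨k, hk, hmin⟩ := Finset.exists_min_image F x ⟨j, hj⟩
    exact ⟨k, Finset.mem_filter.2 ⟨hk, hmin⟩⟩
  unfold argminBin
  rw [dif_pos hne]
  exact (Finset.mem_filter.1 (Finset.min'_mem _ hne)).2 j hj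

/-- A sum over two-element subsets is half the sum over ordered pairs of distinct elements. -/
lemma two_mul_sum_pairs (g : Finset (Fin N) → ℝ) :
    2 * ∑ F ∈ Finset.powersetCard 2 (Finset.univ : Finset (Fin N)), g F =
      ∑ z ∈ (Finset.univ : Finset (Fin N)).offDiag, g {z.1, z.2} := by
  have hmaps : ∀ z ∈ (Finset.univ : Finset (Fin N)).offDiag,
      ({z.1, z.2} : Finset (Fin N)) ∈ Finset.powersetCard 2 Finset.univ := by
    intro z hz
    rw [Finset.mem_offDiag] at hz
    exact Finset.mem_powersetCard.2 ⟨Finset.subset_univ _, Finset.card_pair hz.2.2⟩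
  rw [← Finset.sum_fiberwise_of_maps_to hmaps, Finset.mul_sum]
  refine Finset.sum_congr rfl fun F hF => ?_
  obtain ⟨a, b, hab, rfl⟩ := Finset.card_eq_two.1 (Finset.mem_powersetCard.1 hF).2
  have hfib : ((Finset.univ : Finset (Fin N)).offDiag.filter
      fun z => ({z.1, z.2} : Finset (Fin N)) = {a, b}) = {(a, b), (b, a)} := by
    ext ⟨i, j⟩
    simp only [Finset.mem_filter, Finset.mem_offDiag, Finset.mem_univ, true_and,
      Finset.mem_insert, Finset.mem_singleton, Prod.mk.injEq]
    constructor
    · rintro ⟨hij, h⟩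
      have hi : i ∈ ({a, b} : Finset (Fin N)) := h ▸ Finset.mem_insert_self _ _
      have hj : j ∈ ({a, b} : Finset (Fin N)) := by rw [← h]; simp
      simp only [Finset.mem_insert, Finset.mem_singleton] at hi hj
      rcases hi with rfl | rfl <;> rcases hj with rfl | rfl <;> simp_all
    · rintro (⟨rfl, rfl⟩ | ⟨rfl, rfl⟩)
      · exact ⟨hab, rfl⟩
      · exact ⟨hab.symm, Finset.pair_comm _ _⟩
  rw [Finset.sum_congr hfib (g := fun _ => g {a, b})]
  · rw [Finset.sum_const, Finset.card_pair (by simp [hab]), nsmul_eq_mul]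
    norm_num
  · intro z hz
    simp only [Finset.mem_insert, Finset.mem_singleton] at hz
    rcases hz with rfl | rfl
    · rfl
    · simp [Finset.pair_comm]

/-- Greedy placement on a uniform random pair samples a monotone function `f` of the load with a
deficit proportional to `∑ (f i - f m)`, where `m` is a least loaded bin. -/
lemma sum_argmin_le [NeZero N] (x : Fin N → ℕ) (f : Fin N → ℝ) (m : Fin N)
    (hf : ∀ i j, x i ≤ x j → f i ≤ f j) (hm : ∀ i, x m ≤ x i) :
    2 * ∑ F ∈ Finset.powersetCard 2 (Finset.univ : Finset (Fin N)), f (argminBin x F) ≤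
      ((N : ℝ) - 1) * ∑ i, f i - (∑ i, f i - N * f m) := by
  let h : Fin N → Fin N → ℝ := fun i j =>
    (f i + f j) / 2 - (1 / 2) * ((if i = m then f j - f m else 0) +
      (if j = m then f i - f m else 0))
  have hle : ∀ z ∈ (Finset.univ : Finset (Fin N)).offDiag,
      f (argminBin x {z.1, z.2}) ≤ h z.1 z.2 := by
    rintro ⟨i, j⟩ hz
    have h1 : f (argminBin x {i, j}) ≤ f i := hf _ _ (argminBin_pair x _ i (by simp))
    have h2 : f (argminBin x {i, j}) ≤ f j := hf _ _ (argminBin_pair x _ j (by simp))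
    have hij : i ≠ j := (Finset.mem_offDiag.1 hz).2.2
    simp only [h]
    split_ifs with hi hj hj
    · exact absurd (hi.trans hj.symm) hij
    · subst hi; linarith
    · subst hj; linarith
    · linarith
  rw [two_mul_sum_pairs fun F => f (argminBin x F)]
  refine (Finset.sum_le_sum hle).trans (le_of_eq ?_)
  have hdiag : ∑ z ∈ (Finset.univ : Finset (Fin N)).offDiag, h z.1 z.2 =
      ∑ i, ∑ j, h i j - ∑ i, h i i := by
    have h3 := Finset.sum_union (f := fun z : Fin N × Fin N => h z.1 z.2)
      (Finset.disjoint_diag_offDiag (Finset.univ : Finset (Fin N)))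
    rw [Finset.diag_union_offDiag, Finset.sum_product, Finset.sum_diag] at h3
    linarith
  have hii : ∀ i, h i i = f i := by
    intro i
    simp only [h]
    split_ifs with hi
    · subst hi; ring
    · ring
  rw [hdiag]
  simp only [hii]
  simp only [h, Finset.sum_sub_distrib, Finset.sum_add_distrib, ← Finset.mul_sum,
    ← Finset.sum_div, Finset.sum_const, Finset.card_univ, Fintype.card_fin, nsmul_eq_mul,
    Finset.sum_ite_eq', Finset.mem_univ, if_true]
  have h4 : ∑ i : Fin N, ∑ j : Fin N, (if i = m then f j - f m else 0) =
      ∑ j, f j - N * f m := by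
    rw [Finset.sum_comm]
    simp [Finset.sum_sub_distrib]
  rw [h4]
  ring

/-! ### Exponential and quadratic potentials -/

/-- The exponential potential `∑ exp (α (x_i - t/N))`. -/
noncomputable def expPot (α : ℝ) (t : ℕ) (x : Fin N → ℕ) : ℝ :=
  ∑ i, Real.exp (α * ((x i : ℝ) - (t : ℝ) / N))

/-- The quadratic potential `∑ (x_i - t/N)²`. -/
noncomputable def sqPot (t : ℕ) (x : Fin N → ℕ) : ℝ :=
  ∑ i, ((x i : ℝ) - (t : ℝ) / N) ^ 2

lemma expPot_nonneg (α : ℝ) (t : ℕ) (x : Fin N → ℕ) : 0 ≤ expPot α t x :=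
  Finset.sum_nonneg fun _ _ => (Real.exp_pos _).le

lemma le_maxLoad (x : Fin N → ℕ) (i : Fin N) : x i ≤ maxLoad x :=
  Finset.le_sup (f := x) (Finset.mem_univ i)

lemma exists_maxLoad [NeZero N] (x : Fin N → ℕ) : ∃ i, maxLoad x = x i := by
  obtain ⟨i, -, h⟩ := Finset.exists_mem_eq_sup (Finset.univ : Finset (Fin N))
    ⟨0, Finset.mem_univ _⟩ x
  exact ⟨i, h⟩

lemma expPot_step [NeZero N] (α : ℝ) (t : ℕ) (flex : Bool) (a : Arrival N) (x : Fin N → ℕ) :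
    expPot α (t + 1) (greedyStep flex a x) = Real.exp (-(α / N)) * (expPot α t x +
      (Real.exp α - 1) * Real.exp (α * ((x (chosenBin flex a x) : ℝ) - (t : ℝ) / N))) := by
  unfold expPot
  set k := chosenBin flex a x with hk
  have : ∀ i, Real.exp (α * ((greedyStep flex a x i : ℝ) - ((t + 1 : ℕ) : ℝ) / N)) =
      Real.exp (-(α / N)) * (Real.exp (α * ((x i : ℝ) - (t : ℝ) / N)) +
        if i = k then (Real.exp α - 1) * Real.exp (α * ((x i : ℝ) - (t : ℝ) / N)) else 0) := by
    intro i
    rw [greedyStep_eq, ← hk]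
    split_ifs
    · have : Real.exp (α * ((x i : ℝ) - (t : ℝ) / N)) +
          (Real.exp α - 1) * Real.exp (α * ((x i : ℝ) - (t : ℝ) / N)) =
          Real.exp α * Real.exp (α * ((x i : ℝ) - (t : ℝ) / N)) := by ring
      rw [this, ← Real.exp_add, ← Real.exp_add]
      congr 1; push_cast; ring
    · rw [add_zero, add_zero, ← Real.exp_add]
      congr 1; push_cast; ring
  simp only [this, ← Finset.mul_sum, Finset.sum_add_distrib, Finset.sum_ite_eq',
    Finset.mem_univ, if_true]

/-- Drift of the exponential potential under flexing. -/
lemma expPot_drift [NeZero N] (hN : 2 ≤ N) {q : ℝ} (hq0 : 0 < q) (hq1 : q ≤ 1) {ε α : ℝ}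
    (hε : ε = q / (2 * (N.choose 2 : ℝ))) (hα : α = ε / 2) (t : ℕ) (x : Fin N → ℕ)
    (hx : ∑ i, x i = t) :
    ∑ a : Arrival N, arrivalProb N q a * expPot α (t + 1) (greedyStep true a x) ≤
      Real.exp (-(α * ε / 2)) * expPot α t x + N * Real.exp α := by
  have hC := choose_two_pos hN
  have hN2 : (2 : ℝ) ≤ N := by exact_mod_cast hN
  have hC2 : (N.choose 2 : ℝ) = N * (N - 1) / 2 := Nat.cast_choose_two ℝ N
  have hε0 : 0 < ε := by rw [hε]; positivity
  have hα0 : 0 < α := by rw [hα]; positivity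
  have hεN : ε * N ≤ 1 := by
    rw [hε, div_mul_eq_mul_div, div_le_one (by positivity), hC2]
    nlinarith
  have hε1 : ε ≤ 1 := by nlinarith
  set f : Fin N → ℝ := fun i => Real.exp (α * ((x i : ℝ) - (t : ℝ) / N)) with hfdef
  have hf : ∀ i j, x i ≤ x j → f i ≤ f j := by
    intro i j hij
    apply Real.exp_le_exp.2
    have : (x i : ℝ) ≤ x j := by exact_mod_cast hij
    gcongr
  obtain ⟨m, -, hm⟩ := Finset.exists_min_image (Finset.univ : Finset (Fin N)) x
    ⟨0, Finset.mem_univ _⟩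
  have hm' : ∀ i, x m ≤ x i := fun i => hm i (Finset.mem_univ i)
  have hfm : f m ≤ 1 := by
    apply Real.exp_le_one_iff.2
    apply mul_nonpos_of_nonneg_of_nonpos hα0.le
    have h1 : N * x m ≤ t := by
      rw [← hx]
      simpa using Finset.card_nsmul_le_sum Finset.univ x (x m) (fun i _ => hm' i)
    have h2 : (N : ℝ) * x m ≤ t := by exact_mod_cast h1
    rw [sub_nonpos, le_div_iff₀ (by linarith)]
    linarith
  have hΦ : ∑ i, f i = expPot α t x := rfl
  have hΦ0 := expPot_nonneg α t x
  have hsum : ∑ a : Arrival N, arrivalProb N q a * f (chosenBin true a x) ≤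
      expPot α t x * (1 / N - ε) + ε * N := by
    have h1 := arrival_sum_flex hN q x f
    have h2 := sum_argmin_le x f m hf hm'
    rw [hΦ] at h1 h2
    unfold chosenBin
    rw [h1]
    have h3 : q / (N.choose 2 : ℝ) = 2 * ε := by rw [hε]; field_simp
    have h4 : ε * (N * (N - 1)) = q := by
      rw [hε, hC2]
      have : (N : ℝ) - 1 ≠ 0 := by linarith
      field_simp
    have h5 : (1 - q) / N = 1 / N - ε * (N - 1) := by
      rw [← h4]; field_simp
    rw [h3, h5]
    have h6 : ε * (N * f m) ≤ ε * N := by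
      apply mul_le_mul_of_nonneg_left _ hε0.le
      nlinarith
    nlinarith [mul_le_mul_of_nonneg_left h2 hε0.le]
  have hexp : 1 ≤ Real.exp α := Real.one_le_exp hα0.le
  have hquad : Real.exp α - 1 ≤ α + α ^ 2 := by
    have h1 := Real.abs_exp_sub_one_sub_id_le (x := α) (by rw [abs_of_pos hα0]; linarith)
    have h2 := (abs_le.1 h1).2
    linarith
  have hNε : 0 ≤ 1 / (N : ℝ) - ε := by
    rw [sub_nonneg, le_div_iff₀ (by linarith)]; exact hεN
  have hfac : Real.exp (-(α / N)) * (1 + (Real.exp α - 1) * (1 / N - ε)) ≤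
      Real.exp (-(α * ε / 2)) := by
    have h1 : 1 + (Real.exp α - 1) * (1 / N - ε) ≤
        Real.exp ((α + α ^ 2) * (1 / N - ε)) := by
      have h2 := Real.add_one_le_exp ((α + α ^ 2) * (1 / N - ε))
      have h3 := mul_le_mul_of_nonneg_right hquad hNε
      linarith
    refine (mul_le_mul_of_nonneg_left h1 (Real.exp_pos _).le).trans ?_
    rw [← Real.exp_add]
    apply Real.exp_le_exp.2
    have h4 : 1 / (N : ℝ) - ε ≤ 1 := by
      have : 1 / (N : ℝ) ≤ 1 := by rw [div_le_one (by linarith)]; linarith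
      linarith
    have h5 : α ^ 2 * (1 / N - ε) ≤ α ^ 2 := by nlinarith [sq_nonneg α]
    have h6 : α ^ 2 = α * ε / 2 := by rw [hα]; ring
    have h7 : (α + α ^ 2) * (1 / (N : ℝ) - ε) = α / N - α * ε + α ^ 2 * (1 / N - ε) := by ring
    rw [h7]
    linarith
  have hE : Real.exp (-(α / N)) ≤ 1 := Real.exp_le_one_iff.2 (by
    have : 0 ≤ α / N := by positivity
    linarith)
  calc ∑ a : Arrival N, arrivalProb N q a * expPot α (t + 1) (greedyStep true a x)
      = Real.exp (-(α / N)) * (expPot α t x + (Real.exp α - 1) *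
          ∑ a : Arrival N, arrivalProb N q a * f (chosenBin true a x)) := by
        simp only [expPot_step]
        have h1 : expPot α t x = ∑ a : Arrival N, arrivalProb N q a * expPot α t x := by
          rw [← Finset.sum_mul, arrivalProb_sum hN, one_mul]
        conv_rhs => rw [h1]
        rw [Finset.mul_sum, ← Finset.sum_add_distrib, Finset.mul_sum]
        refine Finset.sum_congr rfl fun a _ => ?_
        simp only [hfdef]
        ring
    _ ≤ Real.exp (-(α / N)) * (expPot α t x + (Real.exp α - 1) *
          (expPot α t x * (1 / N - ε) + ε * N)) := by
        gcongr
    _ = Real.exp (-(α / N)) * (1 + (Real.exp α - 1) * (1 / N - ε)) * expPot α t x +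
          Real.exp (-(α / N)) * ((Real.exp α - 1) * (ε * N)) := by ring
    _ ≤ Real.exp (-(α * ε / 2)) * expPot α t x + N * Real.exp α := by
        have h1 : (Real.exp α - 1) * (ε * N) ≤ N * Real.exp α := by nlinarith
        have h0 : 0 ≤ (Real.exp α - 1) * (ε * N) := by
          have : 0 ≤ Real.exp α - 1 := by linarith
          positivity
        have h2 : Real.exp (-(α / N)) * ((Real.exp α - 1) * (ε * N)) ≤
            (Real.exp α - 1) * (ε * N) := mul_le_of_le_one_left h0 hE
        have h3 := mul_le_mul_of_nonneg_right hfac hΦ0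
        linarith

/-- Deterministic bound after one ball: every centred load is at most `b + 1` if the gap before
was at most `b`. -/
lemma expPot_step_le [NeZero N] {α : ℝ} (hα : 0 ≤ α) (t : ℕ) (flex : Bool) (a : Arrival N)
    (x : Fin N → ℕ) {b : ℝ} (hb : gap x t ≤ b) :
    expPot α (t + 1) (greedyStep flex a x) ≤ N * (Real.exp α * Real.exp (α * b)) := by
  unfold expPot
  have : ∀ i ∈ (Finset.univ : Finset (Fin N)),
      Real.exp (α * ((greedyStep flex a x i : ℝ) - ((t + 1 : ℕ) : ℝ) / N)) ≤
        Real.exp α * Real.exp (α * b) := by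
    intro i _
    rw [← Real.exp_add]
    apply Real.exp_le_exp.2
    have h1 : (greedyStep flex a x i : ℝ) ≤ x i + 1 := by
      exact_mod_cast greedyStep_le flex a x i
    have h2 : (x i : ℝ) ≤ maxLoad x := by exact_mod_cast le_maxLoad x i
    have h3 : (t : ℝ) / N ≤ ((t + 1 : ℕ) : ℝ) / N := by gcongr; simp
    unfold gap at hb
    have h4 : (greedyStep flex a x i : ℝ) - ((t + 1 : ℕ) : ℝ) / N ≤ 1 + b := by linarith
    nlinarith
  simpa using Finset.sum_le_card_nsmul _ _ _ this

lemma gap_nonneg [NeZero N] (t : ℕ) (x : Fin N → ℕ) (hx : ∑ i, x i = t) : 0 ≤ gap x t := by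
  have h1 : t ≤ N * maxLoad x := by
    rw [← hx]
    simpa using Finset.sum_le_card_nsmul Finset.univ x (maxLoad x) (fun i _ => le_maxLoad x i)
  have h2 : (t : ℝ) ≤ N * maxLoad x := by exact_mod_cast h1
  have hN : (0 : ℝ) < N := by exact_mod_cast Nat.pos_of_ne_zero (NeZero.ne N)
  unfold gap
  rw [sub_nonneg, div_le_iff₀ hN]
  linarith

lemma gap_sq_le [NeZero N] (t : ℕ) (x : Fin N → ℕ) : gap x t ^ 2 ≤ sqPot t x := by
  obtain ⟨i, hi⟩ := exists_maxLoad x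
  unfold gap sqPot
  rw [hi]
  exact Finset.single_le_sum (f := fun i => ((x i : ℝ) - (t : ℝ) / N) ^ 2)
    (fun _ _ => sq_nonneg _) (Finset.mem_univ i)

/-- Without flexing the centred loads are martingales, so the quadratic potential grows by at
most one per step in expectation. -/
lemma sqPot_drift [NeZero N] (hN : 2 ≤ N) (q : ℝ) (t : ℕ) (x : Fin N → ℕ)
    (hx : ∑ i, x i = t) :
    ∑ a : Arrival N, arrivalProb N q a * sqPot (t + 1) (greedyStep false a x) ≤
      sqPot t x + 1 := by
  have hN0 : (N : ℝ) ≠ 0 := by positivity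
  have hNp : (0 : ℝ) < N := by positivity
  have hx' : ∑ i, (x i : ℝ) = t := by exact_mod_cast hx
  have hy : ∑ i, ((x i : ℝ) - (t : ℝ) / N) = 0 := by
    rw [Finset.sum_sub_distrib, hx']
    simp
    field_simp
    simp
  have hstep : ∀ a : Arrival N, sqPot (t + 1) (greedyStep false a x) =
      sqPot t x + (1 - 1 / N) + 2 * ((x (chosenBin false a x) : ℝ) - (t : ℝ) / N) := by
    intro a
    unfold sqPot
    set k := chosenBin false a x with hk
    have : ∀ i, ((greedyStep false a x i : ℝ) - ((t + 1 : ℕ) : ℝ) / N) ^ 2 =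
        ((x i : ℝ) - (t : ℝ) / N) ^ 2 - (2 / N) * ((x i : ℝ) - (t : ℝ) / N) + (1 / N) ^ 2 +
          if i = k then 2 * ((x i : ℝ) - (t : ℝ) / N) + 1 - 2 / N else 0 := by
      intro i
      rw [greedyStep_eq, ← hk]
      split_ifs <;> · push_cast; ring
    simp only [this, Finset.sum_add_distrib, Finset.sum_sub_distrib, ← Finset.mul_sum, hy,
      Finset.sum_ite_eq', Finset.mem_univ, if_true, Finset.sum_const, Finset.card_univ,
      Fintype.card_fin, nsmul_eq_mul]
    have hNN : (N : ℝ) * (1 / N) ^ 2 = 1 / N := by field_simp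
    rw [hNN]
    ring
  have hk := arrival_sum_noflex hN q x fun i => (x i : ℝ) - (t : ℝ) / N
  rw [hy, mul_zero] at hk
  simp only [hstep, mul_add (arrivalProb N q _), Finset.sum_add_distrib, ← Finset.sum_mul,
    arrivalProb_sum hN]
  have h2 : ∑ a : Arrival N, arrivalProb N q a *
      (2 * ((x (chosenBin false a x) : ℝ) - (t : ℝ) / N)) = 0 := by
    have h3 : ∑ a : Arrival N, arrivalProb N q a *
      (2 * ((x (chosenBin false a x) : ℝ) - (t : ℝ) / N)) = 2 * ∑ a : Arrival N,
        arrivalProb N q a * ((x (chosenBin false a x) : ℝ) - (t : ℝ) / N) := by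
      rw [Finset.mul_sum]
      exact Finset.sum_congr rfl fun _ _ => by ring
    rw [h3]
    unfold chosenBin
    rw [hk, mul_zero]
  rw [h2]
  have : 0 < 1 / (N : ℝ) := by positivity
  linarith

/-! ### The dynamic opaque process -/

/-- The slope of the trigger line: the policy starts flexing once `Gap(t) ≥ trig · (T - t)`. -/
noncomputable def trig (N : ℕ) (q : ℝ) : ℝ := 1 / (10 * (N.choose 2 : ℝ)) * q / N

lemma trig_pos [NeZero N] (hN : 2 ≤ N) {q : ℝ} (hq0 : 0 < q) : 0 < trig N q := by
  have := choose_two_pos hN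
  have : (0 : ℝ) < N := by positivity
  unfold trig; positivity

lemma dyn_loads_succ [NeZero N] {T : ℕ} (q : ℝ) (xs : Fin T → Arrival N) {t : ℕ} (ht : t < T) :
    (dynOpaque N T q xs (t + 1)).2 =
      greedyStep (dynOpaque N T q xs t).1 (xs ⟨t, ht⟩) (dynOpaque N T q xs t).2 := by
  simp [dynOpaque, ht]

lemma dyn_flag_succ [NeZero N] {T : ℕ} (q : ℝ) (xs : Fin T → Arrival N) (t : ℕ) :
    (dynOpaque N T q xs (t + 1)).1 = true ↔ (dynOpaque N T q xs t).1 = true ∨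
      trig N q * ((T : ℝ) - ((t + 1 : ℕ) : ℝ)) ≤
        gap (dynOpaque N T q xs (t + 1)).2 (t + 1) := by
  have h : trig N q * ((T : ℝ) - ((t + 1 : ℕ) : ℝ)) =
      1 / (10 * (N.choose 2 : ℝ)) * ((T : ℝ) - ((t : ℝ) + 1)) * q / N := by
    unfold trig; push_cast; ring
  rw [h]
  simp only [dynOpaque, Bool.or_eq_true, Bool.if_false_right, Bool.and_true, decide_eq_true_eq]

lemma dyn_flag_zero [NeZero N] (hN : 2 ≤ N) {T : ℕ} (hT : 0 < T) {q : ℝ} (hq0 : 0 < q)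
    (xs : Fin T → Arrival N) : (dynOpaque N T q xs 0).1 = false := by
  have := choose_two_pos hN
  have h1 : (0 : ℝ) < N := by positivity
  have h2 : (0 : ℝ) < T := by positivity
  have h3 : ¬ (1 / (10 * (N.choose 2 : ℝ))) * (T : ℝ) * q / (N : ℝ) ≤ 0 := by
    push Not; positivity
  simp only [dynOpaque, if_neg h3]

/-- As long as the flag is down the gap is below the trigger line. -/
lemma dyn_gap_lt [NeZero N] (hN : 2 ≤ N) {T : ℕ} {q : ℝ} (hq0 : 0 < q)
    (xs : Fin T → Arrival N) {t : ℕ} (hf : (dynOpaque N T q xs t).1 = false) :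
    gap (dynOpaque N T q xs t).2 t ≤ trig N q * ((T : ℝ) - t) := by
  cases t with
  | zero =>
    have := trig_pos hN hq0
    have h0 : maxLoad (fun _ : Fin N => 0) = 0 := by simp [maxLoad]
    simp only [dynOpaque, gap, h0]
    simp
    positivity
  | succ t =>
    by_contra hcon
    have := (dyn_flag_succ q xs t).2 (Or.inr (not_le.1 hcon).le)
    rw [hf] at this
    exact absurd this (by simp)

lemma dyn_sum [NeZero N] {T : ℕ} (q : ℝ) (xs : Fin T → Arrival N) {t : ℕ} (ht : t ≤ T) :
    ∑ i, (dynOpaque N T q xs t).2 i = t := by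
  induction t with
  | zero => simp [dynOpaque]
  | succ t ih => rw [dyn_loads_succ q xs ht, greedyStep_sum, ih (by omega)]

lemma dyn_flag_T [NeZero N] {T : ℕ} (hT : 0 < T) (q : ℝ) (xs : Fin T → Arrival N) :
    (dynOpaque N T q xs T).1 = true := by
  obtain ⟨t, rfl⟩ : ∃ t, T = t + 1 := ⟨T - 1, by omega⟩
  rw [dyn_flag_succ]
  right
  simpa using gap_nonneg _ _ (dyn_sum q xs le_rfl)

lemma dyn_maxLoad_mono [NeZero N] {T : ℕ} (q : ℝ) (xs : Fin T → Arrival N) {s t : ℕ}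
    (hst : s ≤ t) (ht : t ≤ T) :
    maxLoad (dynOpaque N T q xs s).2 ≤ maxLoad (dynOpaque N T q xs t).2 := by
  induction t, hst using Nat.le_induction with
  | base => exact le_rfl
  | succ t hst ih =>
    refine (ih (by omega)).trans ?_
    rw [dyn_loads_succ q xs ht]
    exact Finset.sup_mono_fun fun i _ => greedyStep_ge _ _ _ i

/-- The state at time `s` depends only on the first `s` arrivals. -/
lemma dyn_update [NeZero N] {T : ℕ} (q : ℝ) (xs : Fin T → Arrival N) (t : Fin T)
    (a : Arrival N) {s : ℕ} (hs : s ≤ t) :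
    dynOpaque N T q (Function.update xs t a) s = dynOpaque N T q xs s := by
  induction s with
  | zero => rfl
  | succ s ih =>
    have hsT : s < T := by have := t.2; omega
    have hne : (⟨s, hsT⟩ : Fin T) ≠ t := by
      intro h; rw [← h] at hs; simp at hs
    simp only [dynOpaque, ih (by omega), hsT, dif_pos, Function.update_of_ne hne]

/-- Growth of the expected exponential potential along the process.  The bound
`A · exp (α · trig · (T - t))` is preserved since the contraction factor `exp (-αε/2)` beats
the decay `exp (-α · trig)` of the trigger line. -/
lemma expec_expPot_le [NeZero N] (hN : 2 ≤ N) {q : ℝ} (hq0 : 0 < q) (hq1 : q ≤ 1) {ε α A : ℝ}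
    (hε : ε = q / (2 * (N.choose 2 : ℝ))) (hα : α = ε / 2) (T : ℕ)
    (hAN : (N : ℝ) ≤ A)
    (hA : 2 * N * Real.exp α ≤
      A * (Real.exp (-(α * trig N q)) - Real.exp (-(α * ε / 2)))) {t : ℕ} (ht : t ≤ T) :
    expec N T q (fun xs => expPot α t (dynOpaque N T q xs t).2) ≤
      A * Real.exp (α * trig N q * ((T : ℝ) - t)) := by
  have hC := choose_two_pos hN
  have hε0 : 0 < ε := by rw [hε]; positivity
  have hα0 : 0 < α := by rw [hα]; positivity
  have htr := trig_pos hN hq0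
  have hA0 : 0 ≤ A := le_trans (by positivity) hAN
  induction t with
  | zero =>
    have h0 : ∀ xs : Fin T → Arrival N, expPot α 0 (dynOpaque N T q xs 0).2 = N := by
      intro xs; simp [expPot, dynOpaque]
    simp only [h0]
    rw [expec_const hN]
    have : 1 ≤ Real.exp (α * trig N q * ((T : ℝ) - (0 : ℕ))) := by
      apply Real.one_le_exp; simp; positivity
    nlinarith
  | succ t ih =>
    have htT : t < T := ht
    set E := Real.exp (α * trig N q * ((T : ℝ) - t)) with hE
    have htR : (t : ℝ) ≤ T := by exact_mod_cast htT.le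
    have hE1 : 1 ≤ E := Real.one_le_exp (mul_nonneg (by positivity) (by linarith))
    rw [expec_resample hN q ⟨t, htT⟩]
    have hstep : ∀ xs : Fin T → Arrival N,
        ∑ a, arrivalProb N q a * expPot α (t + 1)
          (dynOpaque N T q (Function.update xs ⟨t, htT⟩ a) (t + 1)).2 ≤
        Real.exp (-(α * ε / 2)) * expPot α t (dynOpaque N T q xs t).2 +
          2 * N * Real.exp α * E := by
      intro xs
      have h1 : ∀ a, (dynOpaque N T q (Function.update xs ⟨t, htT⟩ a) (t + 1)).2 =
          greedyStep (dynOpaque N T q xs t).1 a (dynOpaque N T q xs t).2 := by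
        intro a
        rw [dyn_loads_succ q _ htT, dyn_update q xs ⟨t, htT⟩ a le_rfl, Function.update_self]
      simp only [h1]
      have hNe : (0 : ℝ) ≤ N * Real.exp α := by positivity
      cases hflag : (dynOpaque N T q xs t).1 with
      | true =>
        have h2 := expPot_drift hN hq0 hq1 hε hα t _ (dyn_sum q xs htT.le)
        nlinarith
      | false =>
        have h3 := dyn_gap_lt hN hq0 xs hflag
        have h4 : ∀ a ∈ (Finset.univ : Finset (Arrival N)), arrivalProb N q a *
            expPot α (t + 1) (greedyStep false a (dynOpaque N T q xs t).2) ≤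
            arrivalProb N q a * (N * (Real.exp α * E)) := by
          intro a _
          have h5 := expPot_step_le hα0.le t false a _ h3
          rw [← mul_assoc] at h5
          exact mul_le_mul_of_nonneg_left (by rw [hE]; simpa [mul_assoc] using h5)
            (arrivalProb_nonneg hq0 hq1 a)
        refine (Finset.sum_le_sum h4).trans ?_
        rw [← Finset.sum_mul, arrivalProb_sum hN, one_mul]
        have := mul_nonneg (Real.exp_pos (-(α * ε / 2))).le
          (expPot_nonneg α t (dynOpaque N T q xs t).2)
        nlinarith
    refine (expec_mono hq0 hq1 hstep).trans ?_
    rw [expec_add, expec_mul, expec_const hN]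
    have hE' : Real.exp (α * trig N q * ((T : ℝ) - (t + 1 : ℕ))) =
        Real.exp (-(α * trig N q)) * E := by
      rw [hE, ← Real.exp_add]; congr 1; push_cast; ring
    rw [hE']
    have h6 := mul_le_mul_of_nonneg_left (ih htT.le) (Real.exp_pos (-(α * ε / 2))).le
    have h7 := mul_le_mul_of_nonneg_right hA (by linarith : 0 ≤ E)
    nlinarith

/-- The number of periods before `t` in which the flag is up. -/
noncomputable def flagCount (N T : ℕ) [NeZero N] (q : ℝ) (xs : Fin T → Arrival N) (t : ℕ) : ℝ :=
  ∑ s ∈ Finset.range t, if (dynOpaque N T q xs s).1 = true then 1 else 0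

lemma flagCount_eq_zero [NeZero N] {T : ℕ} (q : ℝ) (xs : Fin T → Arrival N) {t : ℕ}
    (hf : (dynOpaque N T q xs t).1 = false) : flagCount N T q xs t = 0 := by
  induction t with
  | zero => simp [flagCount]
  | succ t ih =>
    have h : (dynOpaque N T q xs t).1 = false := by
      by_contra hcon
      have := (dyn_flag_succ q xs t).2 (Or.inl (by simpa using hcon))
      rw [hf] at this
      exact absurd this (by simp)
    have h2 := ih h
    unfold flagCount at h2 ⊢
    rw [Finset.sum_range_succ, h2, h]
    simp

/-- The quadratic potential stopped at the trigger time `T⋆`, with its value from `T⋆` on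
replaced by the lower bound `(trig · (T - T⋆))²`; once the flag is up, `T - t + flagCount t` is
constant and equal to `T - T⋆`. -/
noncomputable def stoppedPot (N T : ℕ) [NeZero N] (q : ℝ) (xs : Fin T → Arrival N) (t : ℕ) : ℝ :=
  if (dynOpaque N T q xs t).1 = true
  then (trig N q * ((T : ℝ) - t + flagCount N T q xs t)) ^ 2
  else sqPot t (dynOpaque N T q xs t).2

lemma stoppedPot_succ_of_flag [NeZero N] {T : ℕ} (q : ℝ) (xs : Fin T → Arrival N) {t : ℕ}
    (hf : (dynOpaque N T q xs t).1 = true) :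
    stoppedPot N T q xs (t + 1) = stoppedPot N T q xs t := by
  have h1 := (dyn_flag_succ q xs t).2 (Or.inl hf)
  unfold stoppedPot
  rw [if_pos h1, if_pos hf]
  have : flagCount N T q xs (t + 1) = flagCount N T q xs t + 1 := by
    unfold flagCount; rw [Finset.sum_range_succ, if_pos hf]
  rw [this]
  push_cast
  ring

lemma stoppedPot_succ_of_not_flag [NeZero N] (hN : 2 ≤ N) {T : ℕ} {q : ℝ} (hq0 : 0 < q)
    (xs : Fin T → Arrival N) {t : ℕ} (ht : t < T) (hf : (dynOpaque N T q xs t).1 = false) :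
    stoppedPot N T q xs (t + 1) ≤ sqPot (t + 1) (dynOpaque N T q xs (t + 1)).2 := by
  unfold stoppedPot
  split_ifs with h
  · have h1 : flagCount N T q xs (t + 1) = 0 := by
      have h2 := flagCount_eq_zero q xs hf
      unfold flagCount at h2 ⊢
      rw [Finset.sum_range_succ, h2, hf]
      simp
    rw [h1, add_zero]
    have h3 := (dyn_flag_succ q xs t).1 h
    rw [hf] at h3
    simp only [Bool.false_eq_true, false_or] at h3
    have h4 : (((t + 1 : ℕ)) : ℝ) ≤ T := by exact_mod_cast ht
    refine le_trans ?_ (gap_sq_le _ _)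
    exact pow_le_pow_left₀ (mul_nonneg (trig_pos hN hq0).le (by linarith)) h3 2
  · exact le_rfl

lemma expec_stoppedPot_le [NeZero N] (hN : 2 ≤ N) {q : ℝ} (hq0 : 0 < q) (hq1 : q ≤ 1) {T : ℕ}
    (hT : 0 < T) {t : ℕ} (ht : t ≤ T) :
    expec N T q (fun xs => stoppedPot N T q xs t) ≤ t := by
  induction t with
  | zero =>
    have h0 : ∀ xs : Fin T → Arrival N, stoppedPot N T q xs 0 = 0 := by
      intro xs
      unfold stoppedPot
      rw [dyn_flag_zero hN hT hq0]
      simp [sqPot, dynOpaque]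
    simp only [h0]
    rw [expec_const hN]
    simp
  | succ t ih =>
    have htT : t < T := ht
    rw [expec_resample hN q ⟨t, htT⟩]
    have hstep : ∀ xs : Fin T → Arrival N,
        ∑ a, arrivalProb N q a * stoppedPot N T q (Function.update xs ⟨t, htT⟩ a) (t + 1) ≤
          stoppedPot N T q xs t + 1 := by
      intro xs
      have hup : ∀ a, ∀ s ≤ t, dynOpaque N T q (Function.update xs ⟨t, htT⟩ a) s =
          dynOpaque N T q xs s := fun a s hs => dyn_update q xs ⟨t, htT⟩ a hs
      have hpot : ∀ a, stoppedPot N T q (Function.update xs ⟨t, htT⟩ a) t =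
          stoppedPot N T q xs t := by
        intro a
        have hc : flagCount N T q (Function.update xs ⟨t, htT⟩ a) t = flagCount N T q xs t :=
          Finset.sum_congr rfl fun s hs => by rw [hup a s (Finset.mem_range.1 hs).le]
        unfold stoppedPot
        rw [hup a t le_rfl, hc]
      cases hflag : (dynOpaque N T q xs t).1 with
      | true =>
        have h1 : ∀ a, stoppedPot N T q (Function.update xs ⟨t, htT⟩ a) (t + 1) =
            stoppedPot N T q xs t := by
          intro a
          rw [stoppedPot_succ_of_flag q _ (by rw [hup a t le_rfl]; exact hflag), hpot a]
        simp only [h1]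
        rw [← Finset.sum_mul, arrivalProb_sum hN]
        linarith
      | false =>
        have h2 : stoppedPot N T q xs t = sqPot t (dynOpaque N T q xs t).2 := by
          unfold stoppedPot; rw [hflag]; simp
        rw [h2]
        refine le_trans (Finset.sum_le_sum fun a _ => ?_)
          (sqPot_drift hN q t _ (dyn_sum q xs htT.le))
        refine mul_le_mul_of_nonneg_left ?_ (arrivalProb_nonneg hq0 hq1 a)
        have h3 := stoppedPot_succ_of_not_flag hN hq0 (Function.update xs ⟨t, htT⟩ a) htT
          (by rw [hup a t le_rfl]; exact hflag)
        rwa [dyn_loads_succ q _ htT, hup a t le_rfl, Function.update_self, hflag] at h3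
    refine (expec_mono hq0 hq1 hstep).trans ?_
    rw [expec_add, expec_const hN]
    push_cast
    linarith [ih htT.le]

/-- Flexing lasts `O(√T)` periods in expectation. -/
lemma expec_flagCount_le [NeZero N] (hN : 2 ≤ N) {q : ℝ} (hq0 : 0 < q) (hq1 : q ≤ 1) {T : ℕ}
    (hT : 0 < T) :
    expec N T q (fun xs => flagCount N T q xs T) ≤
      (1 + 1 / trig N q ^ 2) * Real.sqrt T := by
  have htr := trig_pos hN hq0
  have hTr : (0 : ℝ) < T := by exact_mod_cast hT
  have hs : 0 < Real.sqrt T := Real.sqrt_pos.2 hTr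
  have hss : Real.sqrt T * Real.sqrt T = T := Real.mul_self_sqrt hTr.le
  -- `n ≤ √T + n² / √T`, and `n²` is controlled by the stopped potential.
  have h1 : ∀ xs : Fin T → Arrival N, flagCount N T q xs T ≤
      Real.sqrt T + 1 / (trig N q ^ 2 * Real.sqrt T) * stoppedPot N T q xs T := by
    intro xs
    have h2 : stoppedPot N T q xs T = (trig N q * flagCount N T q xs T) ^ 2 := by
      unfold stoppedPot
      rw [if_pos (dyn_flag_T hT q xs)]
      ring
    set n := flagCount N T q xs T
    have h3 : 1 / (trig N q ^ 2 * Real.sqrt T) * (trig N q * n) ^ 2 = n ^ 2 / Real.sqrt T := by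
      field_simp
    rw [h2, h3]
    have h4 : n - Real.sqrt T ≤ n ^ 2 / Real.sqrt T := by
      rw [le_div_iff₀ hs]
      nlinarith [sq_nonneg (n - Real.sqrt T), sq_nonneg n, sq_nonneg (Real.sqrt T)]
    linarith
  refine (expec_mono hq0 hq1 h1).trans ?_
  rw [expec_add, expec_const hN, expec_mul]
  have h5 := mul_le_mul_of_nonneg_left (expec_stoppedPot_le hN hq0 hq1 hT le_rfl)
    (by positivity : 0 ≤ 1 / (trig N q ^ 2 * Real.sqrt T))
  have h6 : 1 / (trig N q ^ 2 * Real.sqrt T) * T = 1 / trig N q ^ 2 * Real.sqrt T := by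
    rw [← hss]; field_simp; simp
  linarith

/-! ### Cycle length and discount count -/

lemma hitTime_le (T S : ℕ) (x : ℕ → Fin N → ℕ) : hitTime T S x ≤ T := by
  unfold hitTime
  split_ifs with h
  · have := (Finset.mem_filter.1 (Finset.min'_mem _ h)).1
    rw [Finset.mem_range] at this
    omega
  · exact le_rfl

/-- The shortfall `T - R` is at most the number of periods at which the maximum load has
already reached `S`. -/
lemma shortfall_le [NeZero N] (T S : ℕ) (q : ℝ) (xs : Fin T → Arrival N) :
    (T : ℝ) - hitTime T S (fun t => (dynOpaque N T q xs t).2) ≤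
      ∑ t ∈ Finset.range T, if S ≤ maxLoad (dynOpaque N T q xs t).2 then (1 : ℝ) else 0 := by
  set R := hitTime T S (fun t => (dynOpaque N T q xs t).2) with hR
  have hRT : R ≤ T := hitTime_le _ _ _
  have hmem : ∀ t ∈ Finset.Ico R T, S ≤ maxLoad (dynOpaque N T q xs t).2 := by
    intro t ht
    rw [Finset.mem_Ico] at ht
    refine le_trans ?_ (dyn_maxLoad_mono q xs ht.1 ht.2.le)
    unfold hitTime at hR
    split_ifs at hR with h
    · have := (Finset.mem_filter.1 (Finset.min'_mem _ h)).2
      rw [← hR] at this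
      exact this.ge
    · omega
  calc (T : ℝ) - R = ∑ t ∈ Finset.Ico R T, (1 : ℝ) := by
        simp [Nat.cast_sub hRT]
    _ = ∑ t ∈ Finset.Ico R T,
          if S ≤ maxLoad (dynOpaque N T q xs t).2 then (1 : ℝ) else 0 :=
        Finset.sum_congr rfl fun t ht => by rw [if_pos (hmem t ht)]
    _ ≤ _ := by
        apply Finset.sum_le_sum_of_subset_of_nonneg
        · intro t ht
          rw [Finset.mem_Ico] at ht
          exact Finset.mem_range.2 ht.2
        · intro t _ _
          split_ifs <;> norm_num

/-- Markov's inequality in the exponential potential. -/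
lemma indicator_le_expPot [NeZero N] {α b : ℝ} (hα : 0 ≤ α) (S t : ℕ) (x : Fin N → ℕ)
    (hb : b ≤ (S : ℝ) - (t : ℝ) / N) :
    (if S ≤ maxLoad x then (1 : ℝ) else 0) ≤ Real.exp (-(α * b)) * expPot α t x := by
  split_ifs with h
  · obtain ⟨i, hi⟩ := exists_maxLoad x
    have h1 : (S : ℝ) ≤ x i := by rw [← hi]; exact_mod_cast h
    have h2 : Real.exp (α * b) ≤ expPot α t x := by
      refine le_trans ?_ (Finset.single_le_sum
        (f := fun i => Real.exp (α * ((x i : ℝ) - (t : ℝ) / N)))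
        (fun _ _ => (Real.exp_pos _).le) (Finset.mem_univ i))
      apply Real.exp_le_exp.2
      exact mul_le_mul_of_nonneg_left (by linarith) hα
    have h3 := mul_le_mul_of_nonneg_left h2 (Real.exp_pos (-(α * b))).le
    rw [← Real.exp_add] at h3
    simpa using h3
  · exact mul_nonneg (Real.exp_pos _).le (expPot_nonneg _ _ _)

/-- The expected shortfall `E[T - R]` is bounded uniformly in the stock level. -/
lemma exists_shortfall_bound [NeZero N] (hN : 2 ≤ N) {q : ℝ} (hq0 : 0 < q) (hq1 : q ≤ 1) :
    ∃ B : ℝ, 0 ≤ B ∧ ∀ S : ℕ, 1 ≤ S →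
      ((N * (S - 1) + 1 : ℕ) : ℝ) - B ≤ dynER N q S := by
  have hC := choose_two_pos hN
  have hC1 : (1 : ℝ) ≤ N.choose 2 := by exact_mod_cast Nat.choose_pos hN
  have hN2 : (2 : ℝ) ≤ N := by exact_mod_cast hN
  obtain ⟨ε, hε⟩ : ∃ ε, ε = q / (2 * (N.choose 2 : ℝ)) := ⟨_, rfl⟩
  obtain ⟨α, hα⟩ : ∃ α, α = ε / 2 := ⟨_, rfl⟩
  have hε0 : 0 < ε := by rw [hε]; positivity
  have hε1 : ε ≤ 1 := by rw [hε, div_le_one (by positivity)]; linarith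
  have hα0 : 0 < α := by rw [hα]; positivity
  have htr := trig_pos hN hq0
  have htrε : trig N q = ε / (5 * N) := by
    unfold trig; rw [hε]; field_simp; norm_num
  have htr1 : trig N q < ε / 2 := by
    rw [htrε]
    apply div_lt_div_of_pos_left hε0 (by norm_num); linarith
  have htr2 : trig N q < 1 / N := by
    rw [htrε, div_lt_div_iff₀ (by positivity) (by positivity)]
    nlinarith
  have hden : 0 < Real.exp (-(α * trig N q)) - Real.exp (-(α * ε / 2)) := by
    rw [sub_pos]
    apply Real.exp_lt_exp.2
    have := mul_lt_mul_of_pos_left htr1 hα0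
    linarith
  obtain ⟨A, hAdef⟩ : ∃ A, A = N + 2 * N * Real.exp α /
    (Real.exp (-(α * trig N q)) - Real.exp (-(α * ε / 2))) := ⟨_, rfl⟩
  have hAN : (N : ℝ) ≤ A := by
    rw [hAdef]; have : 0 ≤ 2 * N * Real.exp α /
      (Real.exp (-(α * trig N q)) - Real.exp (-(α * ε / 2))) := by positivity
    linarith
  have hA : 2 * N * Real.exp α ≤
      A * (Real.exp (-(α * trig N q)) - Real.exp (-(α * ε / 2))) := by
    rw [hAdef, add_mul, div_mul_cancel₀ _ hden.ne']
    have := mul_pos (by linarith : (0 : ℝ) < N) hden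
    linarith
  have hA0 : 0 ≤ A := by linarith
  obtain ⟨r, hr⟩ : ∃ r, r = Real.exp (-(α * (1 / N - trig N q))) := ⟨_, rfl⟩
  have hr0 : 0 ≤ r := by rw [hr]; positivity
  have hr1 : r < 1 := by
    rw [hr, Real.exp_lt_one_iff]
    have := mul_pos hα0 (sub_pos.2 htr2)
    linarith
  have hB0 : 0 ≤ A * (1 - r)⁻¹ := mul_nonneg hA0 (inv_nonneg.2 (by linarith))
  refine ⟨A * (1 - r)⁻¹, hB0, fun S hS => ?_⟩
  unfold dynER
  obtain ⟨T, hTdef⟩ : ∃ T, T = N * (S - 1) + 1 := ⟨_, rfl⟩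
  rw [← hTdef]
  have hTS : (T : ℝ) / N ≤ S := by
    rw [div_le_iff₀ (by linarith), hTdef]
    push_cast [Nat.cast_sub hS]
    nlinarith
  have hpt : ∀ xs : Fin T → Arrival N,
      (T : ℝ) ≤ (hitTime T S (fun t => (dynOpaque N T q xs t).2) : ℝ) +
        ∑ t ∈ Finset.range T, Real.exp (-(α * (((T : ℝ) - t) / N))) *
          expPot α t (dynOpaque N T q xs t).2 := by
    intro xs
    have h1 := shortfall_le T S q xs
    have h2 : ∑ t ∈ Finset.range T,
        (if S ≤ maxLoad (dynOpaque N T q xs t).2 then (1 : ℝ) else 0) ≤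
        ∑ t ∈ Finset.range T, Real.exp (-(α * (((T : ℝ) - t) / N))) *
          expPot α t (dynOpaque N T q xs t).2 := by
      refine Finset.sum_le_sum fun t _ => indicator_le_expPot hα0.le S t _ ?_
      rw [sub_div]; linarith
    linarith
  have h3 := expec_mono hq0 hq1 hpt
  rw [expec_const hN, expec_add, expec_sum] at h3
  have h4 : ∑ t ∈ Finset.range T, expec N T q (fun xs =>
      Real.exp (-(α * (((T : ℝ) - t) / N))) * expPot α t (dynOpaque N T q xs t).2) ≤
      ∑ t ∈ Finset.range T, A * r ^ (T - t) := by
    refine Finset.sum_le_sum fun t ht => ?_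
    have htT : t ≤ T := (Finset.mem_range.1 ht).le
    rw [expec_mul]
    refine (mul_le_mul_of_nonneg_left (expec_expPot_le hN hq0 hq1 hε hα T hAN hA htT)
      (Real.exp_pos _).le).trans (le_of_eq ?_)
    rw [hr, ← Real.exp_nat_mul, mul_left_comm, ← Real.exp_add, Nat.cast_sub htT]
    congr 2
    ring
  have h5 : ∑ t ∈ Finset.range T, A * r ^ (T - t) ≤ A * (1 - r)⁻¹ := by
    rw [← Finset.mul_sum]
    apply mul_le_mul_of_nonneg_left _ hA0
    calc ∑ t ∈ Finset.range T, r ^ (T - t) ≤ ∑ t ∈ Finset.range T, r ^ (T - 1 - t) := by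
          refine Finset.sum_le_sum fun t _ => ?_
          exact pow_le_pow_of_le_one hr0 hr1.le (by omega)
      _ = ∑ t ∈ Finset.range T, r ^ t := Finset.sum_range_reflect (fun t => r ^ t) T
      _ ≤ (1 - r)⁻¹ := by
          rw [← tsum_geometric_of_lt_one hr0 hr1]
          exact (summable_geometric_of_lt_one hr0 hr1).sum_le_tsum _ fun _ _ => pow_nonneg hr0 _
  linarith

lemma dynED_le [NeZero N] (hN : 2 ≤ N) {q : ℝ} (hq0 : 0 < q) (hq1 : q ≤ 1) (S : ℕ) :
    dynED N q S ≤ (1 + 1 / trig N q ^ 2) * Real.sqrt ((N * (S - 1) + 1 : ℕ) : ℝ) := by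
  unfold dynED
  obtain ⟨T, hTdef⟩ : ∃ T, T = N * (S - 1) + 1 := ⟨_, rfl⟩
  rw [← hTdef]
  refine le_trans (expec_mono hq0 hq1 fun xs => ?_)
    (expec_flagCount_le hN hq0 hq1 (by omega : 0 < T))
  unfold dynFlexCount flagCount
  push_cast
  refine le_trans (Finset.sum_le_sum (g := fun s =>
    if (dynOpaque N T q xs s).1 = true then (1 : ℝ) else 0) fun t _ => ?_)
    (Finset.sum_le_sum_of_subset_of_nonneg
      (Finset.range_subset_range.2 (hitTime_le T S _)) fun t _ _ => ?_)
  · by_cases h : (dynOpaque N T q xs t).1 = true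
    · rw [if_pos h]
      split_ifs <;> norm_num
    · rw [if_neg h]
      simp [h]
  · split_ifs <;> norm_num

/-- Jensen's inequality for the square of the cycle length. -/
lemma dynER_sq_le [NeZero N] (hN : 2 ≤ N) {q : ℝ} (hq0 : 0 < q) (hq1 : q ≤ 1) (S : ℕ) :
    dynER N q S ^ 2 ≤ dynER2 N q S := by
  obtain ⟨μ, hμ⟩ : ∃ μ, μ = dynER N q S := ⟨_, rfl⟩
  have h1 : expec N (N * (S - 1) + 1) q (fun xs => 2 * μ * (hitTime (N * (S - 1) + 1) S
      (fun t => (dynOpaque N (N * (S - 1) + 1) q xs t).2) : ℝ)) ≤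
      expec N (N * (S - 1) + 1) q (fun xs => ((hitTime (N * (S - 1) + 1) S
      (fun t => (dynOpaque N (N * (S - 1) + 1) q xs t).2) : ℝ)) ^ 2 + μ ^ 2) :=
    expec_mono hq0 hq1 fun xs => by
      nlinarith [sq_nonneg ((hitTime (N * (S - 1) + 1) S
        (fun t => (dynOpaque N (N * (S - 1) + 1) q xs t).2) : ℝ) - μ)]
  rw [expec_mul, expec_add, expec_const hN] at h1
  change 2 * μ * dynER N q S ≤ dynER2 N q S + μ ^ 2 at h1
  rw [← hμ] at h1 ⊢
  nlinarith

end DynamicOpaque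

/-- **Corollary 2** (cost upper bound for the dynamic opaque selling policy): there exist
constants `θ, c > 0` (depending only on `N, q`) and `S₀` such that for all `S ≥ S₀` and
all `K > 0`, `h > 0`, `δ ∈ [0,1)`:
`C^d ≤ K/(NS - θ) + (h/2)(NS + 1 + θ) + δ q c / √S`. -/
theorem dynamic_opaque_cost_bound (N : ℕ) [NeZero N] (hN : 2 ≤ N) (q : ℝ)
    (hq0 : 0 < q) (hq1 : q ≤ 1) :
    ∃ θ : ℝ, 0 < θ ∧ ∃ c : ℝ, 0 < c ∧ ∃ S₀ : ℕ, ∀ S : ℕ, S₀ ≤ S →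
      ∀ K h δ : ℝ, 0 < K → 0 < h → 0 ≤ δ → δ < 1 →
        dynCost N q K h δ S ≤
          K / ((N : ℝ) * (S : ℝ) - θ) + (h / 2) * ((N : ℝ) * (S : ℝ) + 1 + θ) +
            δ * q * c / Real.sqrt (S : ℝ) := by
  obtain ⟨B, hB0, hB⟩ := exists_shortfall_bound hN hq0 hq1
  have htr := trig_pos hN hq0
  have hN2 : (2 : ℝ) ≤ N := by exact_mod_cast hN
  obtain ⟨M, hM⟩ : ∃ M, M = 1 + 1 / trig N q ^ 2 := ⟨_, rfl⟩
  have hM0 : 0 < M := by rw [hM]; positivity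
  obtain ⟨θ, hθ⟩ : ∃ θ, θ = N + B := ⟨_, rfl⟩
  have hθ0 : 0 < θ := by rw [hθ]; linarith
  -- `S₀ ≥ 2θ` guarantees `E[R] ≥ NS/2`.
  refine ⟨θ, hθ0, 2 * M / q, by positivity, ⌈2 * θ⌉₊ + 1, ?_⟩
  intro S hS K h δ hK hh hδ0 hδ1
  have hS1 : 1 ≤ S := by omega
  have hSr : (1 : ℝ) ≤ S := by exact_mod_cast hS1
  have hSθ : 2 * θ ≤ S := by
    have h1 : ((⌈2 * θ⌉₊ + 1 : ℕ) : ℝ) ≤ S := by exact_mod_cast hS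
    push_cast at h1
    linarith [Nat.le_ceil (2 * θ)]
  have hTr : ((N * (S - 1) + 1 : ℕ) : ℝ) = N * S - N + 1 := by
    push_cast [Nat.cast_sub hS1]; ring
  have hER : N * S - θ ≤ dynER N q S := by
    have := hB S hS1
    rw [hTr] at this
    linarith
  have hNS : (S : ℝ) ≤ N * S := by nlinarith
  have hpos : 0 < N * S - θ := by linarith
  have hμ : 0 < dynER N q S := by linarith
  have hμ2 : N * S / 2 ≤ dynER N q S := by linarith
  have hED : dynED N q S ≤ M * Real.sqrt (N * S) := by
    refine (dynED_le hN hq0 hq1 S).trans ?_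
    rw [← hM]
    apply mul_le_mul_of_nonneg_left _ hM0.le
    apply Real.sqrt_le_sqrt
    rw [hTr]
    linarith
  unfold dynCost
  refine add_le_add (add_le_add ?_ ?_) ?_
  · exact div_le_div_of_nonneg_left hK.le hpos hER
  · apply mul_le_mul_of_nonneg_left _ (by positivity)
    have h1 : dynER N q S ≤ dynER2 N q S / dynER N q S := by
      rw [le_div_iff₀ hμ, ← sq]
      exact dynER_sq_le hN hq0 hq1 S
    linarith
  · have hsS : 0 < Real.sqrt S := Real.sqrt_pos.2 (by linarith)
    have h1 : dynED N q S / dynER N q S ≤ 2 * M / Real.sqrt S := by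
      rw [div_le_div_iff₀ hμ hsS]
      have h2 : Real.sqrt (N * S) * Real.sqrt S ≤ N * S := by
        have h3 : Real.sqrt S ≤ Real.sqrt (N * S) := Real.sqrt_le_sqrt hNS
        have h4 : Real.sqrt (N * S) * Real.sqrt (N * S) = N * S :=
          Real.mul_self_sqrt (by positivity)
        nlinarith [Real.sqrt_nonneg ((N : ℝ) * S)]
      calc dynED N q S * Real.sqrt S ≤ M * Real.sqrt (N * S) * Real.sqrt S :=
            mul_le_mul_of_nonneg_right hED hsS.le
        _ = M * (Real.sqrt (N * S) * Real.sqrt S) := by ring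
        _ ≤ M * (N * S) := mul_le_mul_of_nonneg_left h2 hM0.le
        _ ≤ 2 * M * dynER N q S := by nlinarith
    have h5 := mul_le_mul_of_nonneg_left h1 hδ0
    have h6 : δ * q * (2 * M / q) / Real.sqrt S = δ * (2 * M / Real.sqrt S) := by
      field_simp
    rw [h6, mul_div_assoc]
    exact h5
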